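/- arXiv:2402.19089 — 2 statements merged into one kernel-verified Lean document; each statement's English description precedes it below -/
import Mathlib

section
/- Let 𝒜 be a standardized completely reachable binary circular DFA on ℤ_n (n even) whose orbit subgroup K equals the subgroup 2ℤ_n of even residues and whose orbit O(𝒜) has more than one element. Then for any two distinct states p, q ∈ ℤ_n, the subset ℤ_n \ {p, q} is (n−1)-expandable. -/
/-!
Write `d = δa 0`. Complete reachability forces `δa` to have defect one: every letter that is
not `a` permutes the states, so a word whose image misses exactly one state shows that `δa`
misses only `0` (`range_eq`). Hence `d` has exactly two preimages `0` and `r`, and every other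
state has at most one.

By symmetry let `q.val < p.val`, so that `b^q.val` is a word of length at most `n - 2` carrying
`{0, p - q}` to `{q, p}`.
* If `p - q ≠ d`, then `δa` has at most one preimage of `{0, p - q}`, so the word `a b^q.val`
  expands the complement of `{p, q}`.
* If `p - q = d`, then the `δa`-preimage of `{0, d}` is `{0, r}`. Since the orbit has more than
  one element, `d` is not fixed by `δa`, so `r ≠ d`, and `{0, r}` has at most one preimage: the
  word `a a b^q.val` expands. It is short enough unless `q = n - 2`, `p = n - 1`, which would
  give `d = 1`; this is impossible because `d` lies in the subgroup of even residues.
-/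

/-- The two-letter alphabet of a binary DFA. -/
inductive Letter where
  | a : Letter
  | b : Letter

/-- Left-to-right action of a word on `ZMod n`, where the letter `b` acts as `q ↦ q + 1`
(a cyclic permutation) and the letter `a` acts as the given map `δa`. -/
def act {n : ℕ} (δa : ZMod n → ZMod n) : List Letter → ZMod n → ZMod n
  | [], q => q
  | Letter.a :: w, q => act δa w (δa q)
  | Letter.b :: w, q => act δa w (q + 1)

/-- A binary circular DFA is completely reachable if every nonempty subset of states
is the image of the full state set under the action of some word. -/
def CompletelyReachable {n : ℕ} (δa : ZMod n → ZMod n) : Prop :=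
  ∀ S : Set (ZMod n), S.Nonempty → ∃ w : List Letter, act δa w '' Set.univ = S

/-- A binary circular DFA is standardized if `0` has no `δa`-preimage and `δa 0` is the
unique state with more than one `δa`-preimage. -/
def Standardized {n : ℕ} (δa : ZMod n → ZMod n) : Prop :=
  (∀ q : ZMod n, δa q ≠ 0) ∧
  ∀ p : ZMod n, 1 < {q : ZMod n | δa q = p}.ncard ↔ p = δa 0

/-- The orbit `O(𝒜) = {δa^i(0) : i ≥ 1}`. -/
def orbitSet {n : ℕ} (δa : ZMod n → ZMod n) : Set (ZMod n) :=
  {q : ZMod n | ∃ i : ℕ, 1 ≤ i ∧ δa^[i] 0 = q}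

/-- The orbit subgroup `K(𝒜)`: the subgroup of `(ZMod n, +)` generated by the orbit. -/
def orbitSubgroup {n : ℕ} (δa : ZMod n → ZMod n) : AddSubgroup (ZMod n) :=
  AddSubgroup.closure (orbitSet δa)

/-- A word `w` expands a subset `S` if some strictly larger subset `R` satisfies `δ(R,w) = S`. -/
def Expands {n : ℕ} (δa : ZMod n → ZMod n) (w : List Letter) (S : Set (ZMod n)) : Prop :=
  ∃ R : Set (ZMod n), S.ncard < R.ncard ∧ act δa w '' R = S

/-- A subset `S` is `ℓ`-expandable if some word of length at most `ℓ` expands it. -/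
def Expandable {n : ℕ} (δa : ZMod n → ZMod n) (ℓ : ℕ) (S : Set (ZMod n)) : Prop :=
  ∃ w : List Letter, w.length ≤ ℓ ∧ Expands δa w S

theorem act_replicate_b {n : ℕ} (δa : ZMod n → ZMod n) (k : ℕ) (x : ZMod n) :
    act δa (List.replicate k Letter.b) x = x + k := by
  induction k generalizing x with
  | zero => simp [act]
  | succ k ih =>
    rw [List.replicate_succ, act, ih]
    push_cast
    ring

/-- A word acts as a permutation or has image no larger than that of `a`: it contains an `a`, and
only letters `b` precede the first one. -/
theorem act_surjective_or_ncard_le {n : ℕ} [NeZero n] (δa : ZMod n → ZMod n) (w : List Letter) :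
    Function.Surjective (act δa w) ∨
      (act δa w '' Set.univ).ncard ≤ (Set.range δa).ncard := by
  induction w with
  | nil => exact Or.inl fun x => ⟨x, rfl⟩
  | cons l w ih =>
    cases l with
    | a =>
      right
      have h : act δa (Letter.a :: w) '' Set.univ = act δa w '' Set.range δa := by
        rw [← Set.image_univ, Set.image_image]
        rfl
      rw [h]
      exact Set.ncard_image_le (Set.toFinite _)
    | b =>
      have hs : Function.Surjective (fun x : ZMod n => x + 1) := fun y => ⟨y - 1, by simp⟩
      rcases ih with ih | ih
      · exact Or.inl (ih.comp hs)
      · right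
        have h : act δa (Letter.b :: w) '' Set.univ = act δa w '' Set.univ := by
          rw [Set.image_univ, Set.image_univ, ← hs.range_comp (act δa w)]
          rfl
        rwa [h]

theorem range_eq {n : ℕ} [NeZero n] (δa : ZMod n → ZMod n)
    (hstd : Standardized δa) (hcr : CompletelyReachable δa) :
    Set.range δa = {0}ᶜ := by
  have hsub : Set.range δa ⊆ {0}ᶜ := by
    rintro _ ⟨x, rfl⟩
    exact hstd.1 x
  refine Set.eq_of_subset_of_ncard_le hsub ?_ (Set.toFinite _)
  obtain ⟨w, hw⟩ := hcr {0}ᶜ ⟨δa 0, hstd.1 0⟩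
  rcases act_surjective_or_ncard_le δa w with h | h
  · rw [Set.image_univ, h.range_eq] at hw
    have : (0 : ZMod n) ∈ ({0}ᶜ : Set (ZMod n)) := hw ▸ Set.mem_univ _
    simp at this
  · rwa [hw] at h

/-- Besides `0`, the state `δa 0` has exactly one further preimage: with two of them, both `0`
and one of them could be discarded without shrinking the image, which has `n - 1` elements. -/
theorem exists_other_preimage {n : ℕ} [NeZero n] (δa : ZMod n → ZMod n)
    (hstd : Standardized δa) (hcr : CompletelyReachable δa) :
    ∃ r : ZMod n, ∀ x, δa x = δa 0 ↔ x = 0 ∨ x = r := by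
  obtain ⟨r, hr, hr0⟩ := Set.exists_ne_of_one_lt_ncard ((hstd.2 (δa 0)).2 rfl) 0
  refine ⟨r, fun x => ⟨fun hx => ?_, ?_⟩⟩
  · by_contra! hne
    have hcov : Set.range δa ⊆ δa '' ({0, r}ᶜ) := by
      rintro _ ⟨y, rfl⟩
      by_cases hy : y = 0 ∨ y = r
      · refine ⟨x, by simpa using hne, ?_⟩
        rcases hy with rfl | rfl
        · exact hx
        · exact hx.trans hr.symm
      · exact ⟨y, by simpa using hy, rfl⟩
    have h1 := (Set.ncard_le_ncard hcov (Set.toFinite _)).trans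
      (Set.ncard_image_le (Set.toFinite _))
    rw [range_eq δa hstd hcr] at h1
    have h2 := Set.ncard_add_ncard_compl ({0} : Set (ZMod n))
    have h3 := Set.ncard_add_ncard_compl ({0, r} : Set (ZMod n))
    rw [Set.ncard_singleton] at h2
    rw [Set.ncard_pair hr0.symm] at h3
    omega
  · rintro (rfl | rfl)
    · rfl
    · exact hr

/-- A word expands the complement of a pair if it covers that complement and the pair has at most
one preimage. -/
theorem expands_of_preimage {n : ℕ} [NeZero n] (δa : ZMod n → ZMod n) (w : List Letter)
    {p q : ZMod n} (hpq : p ≠ q)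
    (hcov : ∀ y, y ≠ p → y ≠ q → ∃ x, act δa w x = y)
    (hpre : (act δa w ⁻¹' {p, q}).ncard ≤ 1) :
    Expands δa w (Set.univ \ {p, q}) := by
  refine ⟨act δa w ⁻¹' (Set.univ \ {p, q}), ?_, ?_⟩
  · rw [← Set.compl_eq_univ_sdiff, Set.preimage_compl]
    have h1 := Set.ncard_add_ncard_compl (act δa w ⁻¹' {p, q})
    have h2 := Set.ncard_add_ncard_compl ({p, q} : Set (ZMod n))
    rw [Set.ncard_pair hpq] at h2
    omega
  · refine Set.image_preimage_eq_of_subset fun y hy => ?_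
    simp only [Set.mem_sdiff, Set.mem_univ, true_and, Set.mem_insert_iff,
      Set.mem_singleton_iff, not_or] at hy
    exact hcov y hy.1 hy.2

theorem expandable_of_val_lt {n : ℕ} [NeZero n] (hev : Even n) (δa : ZMod n → ZMod n)
    (hstd : Standardized δa) (hcr : CompletelyReachable δa)
    (hK : orbitSubgroup δa = AddSubgroup.zmultiples (2 : ZMod n))
    (hO : 1 < (orbitSet δa).ncard)
    (p q : ZMod n) (hlt : q.val < p.val) :
    Expandable δa (n - 1) (Set.univ \ {p, q}) := by
  have hpq : p ≠ q := by
    rintro rfl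
    exact lt_irrefl _ hlt
  have hp := p.val_lt
  have hmem : ∀ y, y ≠ 0 → ∃ x, δa x = y := fun y hy => by
    have : y ∈ Set.range δa := by
      rw [range_eq δa hstd hcr]
      exact hy
    exact this
  have hcast : ((q.val : ℕ) : ZMod n) = q := ZMod.natCast_zmod_val q
  by_cases hd : p - q = δa 0
  · obtain ⟨r, hr⟩ := exists_other_preimage δa hstd hcr
    have hrd : r ≠ δa 0 := by
      rintro rfl
      have hfix : δa (δa 0) = δa 0 := (hr _).2 (Or.inr rfl)
      have hsub : orbitSet δa ⊆ {δa 0} := by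
        rintro _ ⟨i, hi, rfl⟩
        obtain ⟨j, rfl⟩ := Nat.exists_eq_add_of_le' hi
        rw [Function.iterate_succ_apply]
        exact Function.iterate_fixed hfix j
      have := Set.ncard_le_ncard hsub (Set.toFinite _)
      rw [Set.ncard_singleton] at this
      omega
    have hlen : q.val + 2 ≤ n - 1 := by
      by_contra hcon
      have hpv : p.val = q.val + 1 := by omega
      have hone : δa 0 = 1 := by
        rw [← hd, ← ZMod.natCast_zmod_val p, hpv]
        push_cast
        rw [hcast]
        ring
      have h1 : (1 : ZMod n) ∈ AddSubgroup.zmultiples (2 : ZMod n) := by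
        rw [← hK, ← hone]
        exact AddSubgroup.subset_closure ⟨1, le_rfl, rfl⟩
      obtain ⟨k, hk⟩ := AddSubgroup.mem_zmultiples_iff.1 h1
      -- Reducing `k • 2 = 1` modulo `2 ∣ n` gives `0 = 1`.
      have h2 := congrArg (ZMod.castHom hev.two_dvd (ZMod 2)) hk
      rw [map_zsmul, map_ofNat, map_one] at h2
      have h3 : (2 : ZMod 2) = 0 := rfl
      rw [h3, smul_zero] at h2
      exact absurd h2 (by decide)
    have hact : ∀ x, act δa (Letter.a :: Letter.a :: List.replicate q.val Letter.b) x
        = δa (δa x) + q := fun x => by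
      rw [act, act, act_replicate_b, hcast]
    refine ⟨Letter.a :: Letter.a :: List.replicate q.val Letter.b, by simp; omega,
      expands_of_preimage δa _ hpq (fun y hyp hyq => ?_) ?_⟩
    · obtain ⟨u, hu⟩ := hmem (y - q) (sub_ne_zero.2 hyq)
      have hu0 : u ≠ 0 := by
        rintro rfl
        rw [← hd] at hu
        exact hyp (sub_left_injective hu).symm
      obtain ⟨v, rfl⟩ := hmem u hu0
      exact ⟨v, by rw [hact, hu, sub_add_cancel]⟩
    · have hle : {x | δa x = r}.ncard ≤ 1 := not_lt.1 fun h => hrd ((hstd.2 r).1 h)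
      refine (Set.ncard_le_ncard (fun x hx => ?_) (Set.toFinite _)).trans hle
      rw [Set.mem_preimage, hact] at hx
      rcases hx with hx | hx
      · rw [← eq_sub_iff_add_eq, hd, hr] at hx
        exact hx.resolve_left (hstd.1 x)
      · exact absurd (add_eq_right.1 hx) (hstd.1 _)
  · have hact : ∀ x, act δa (Letter.a :: List.replicate q.val Letter.b) x = δa x + q :=
      fun x => by rw [act, act_replicate_b, hcast]
    refine ⟨Letter.a :: List.replicate q.val Letter.b, by simp; omega,
      expands_of_preimage δa _ hpq (fun y _ hyq => ?_) ?_⟩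
    · obtain ⟨u, hu⟩ := hmem (y - q) (sub_ne_zero.2 hyq)
      exact ⟨u, by rw [hact, hu, sub_add_cancel]⟩
    · have hle : {x | δa x = p - q}.ncard ≤ 1 := not_lt.1 fun h => hd ((hstd.2 _).1 h)
      refine (Set.ncard_le_ncard (fun x hx => ?_) (Set.toFinite _)).trans hle
      rw [Set.mem_preimage, hact] at hx
      rcases hx with hx | hx
      · exact eq_sub_iff_add_eq.2 hx
      · exact absurd (add_eq_right.1 hx) (hstd.1 _)

/-- In a standardized completely reachable binary circular DFA on `ZMod n`
(`n` even) with orbit subgroup `2ℤ_n` and orbit of size `> 1`, for any two distinct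
states `p, q`, the subset `ℤ_n \ {p, q}` is `(n−1)`-expandable. -/
theorem stmt10 {n : ℕ} [NeZero n] (hev : Even n) (δa : ZMod n → ZMod n)
    (hstd : Standardized δa) (hcr : CompletelyReachable δa)
    (hK : orbitSubgroup δa = AddSubgroup.zmultiples (2 : ZMod n))
    (hO : 1 < (orbitSet δa).ncard)
    (p q : ZMod n) (hpq : p ≠ q) :
    Expandable δa (n - 1) (Set.univ \ {p, q}) := by
  rcases lt_or_gt_of_ne (fun h => hpq (ZMod.val_injective n h)) with h | h
  · rw [Set.pair_comm]
    exact expandable_of_val_lt hev δa hstd hcr hK hO q p h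
  · exact expandable_of_val_lt hev δa hstd hcr hK hO p q h
end

section
/- Let 𝒜 be a standardized completely reachable binary circular DFA on ℤ_n with n even and n ≥ 10, with orbit O(𝒜) = {d} a singleton and orbit subgroup K = 2ℤ_n. Then the subset K ⊆ ℤ_n has a reaching word of length at most n²/2. -/
/-! ### Words and their images -/

/-- The subset `S` has a reaching word of length at most `L`. -/
def CanReach {n : ℕ} (δa : ZMod n → ZMod n) (S : Finset (ZMod n)) (L : ℕ) : Prop :=
  ∃ w : List Letter, act δa w '' Set.univ = (S : Set (ZMod n)) ∧ w.length ≤ L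

open Classical in
/-- The preimage of `S` under the action of the word `a bᵏ`. -/
noncomputable def preim {n : ℕ} [NeZero n] (δa : ZMod n → ZMod n) (k : ZMod n)
    (S : Finset (ZMod n)) : Finset (ZMod n) :=
  Finset.univ.filter fun q => δa q + k ∈ S

theorem mem_preim {n : ℕ} [NeZero n] {δa : ZMod n → ZMod n} {k q : ZMod n}
    {S : Finset (ZMod n)} : q ∈ preim δa k S ↔ δa q + k ∈ S := by
  simp [preim]

theorem act_append {n : ℕ} (δa : ZMod n → ZMod n) (u v : List Letter) (q : ZMod n) :
    act δa (u ++ v) q = act δa v (act δa u q) := by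
  induction u generalizing q with
  | nil => rfl
  | cons x u ih => cases x <;> simp [act, ih]

theorem act_replicate {n : ℕ} (δa : ZMod n → ZMod n) (k : ℕ) (q : ZMod n) :
    act δa (List.replicate k Letter.b) q = q + k := by
  induction k generalizing q with
  | zero => simp [act]
  | succ k ih => simp [List.replicate_succ, act, ih]; ring

/-! ### The letter `a` permutes the nonzero states -/

/-- The image of a word is either everything or no larger than the image of `δa`. -/
theorem image_dichotomy {n : ℕ} [NeZero n] (δa : ZMod n → ZMod n) (w : List Letter) :
    act δa w '' Set.univ = Set.univ ∨
      (act δa w '' Set.univ).ncard ≤ (Set.range δa).ncard := by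
  induction w with
  | nil => left; ext x; simp [act]
  | cons x w ih =>
    cases x with
    | a =>
      right
      have : act δa (Letter.a :: w) '' Set.univ = act δa w '' Set.range δa := by
        ext x; simp [act]
      rw [this]
      exact Set.ncard_image_le (Set.toFinite _)
    | b =>
      have : act δa (Letter.b :: w) '' Set.univ = act δa w '' Set.univ := by
        ext x
        simp only [Set.image_univ, Set.mem_range, act]
        constructor
        · rintro ⟨y, rfl⟩; exact ⟨y + 1, rfl⟩
        · rintro ⟨y, rfl⟩; exact ⟨y - 1, by simp⟩
      rwa [this]

/-- Reachability of `ℤ_n ∖ {0}` forces `δa` to have the largest range allowed. -/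
theorem surj_of_reach {n : ℕ} [NeZero n] (hn : 2 ≤ n) {δa : ZMod n → ZMod n}
    (h0 : ∀ q, δa q ≠ 0) (hcr : CompletelyReachable δa) (x : ZMod n) (hx : x ≠ 0) :
    ∃ q, δa q = x := by
  have : Fact (1 < n) := ⟨hn⟩
  obtain ⟨w, hw⟩ := hcr {0}ᶜ ⟨1, by simp⟩
  have hsub : Set.range δa ⊆ {0}ᶜ := by
    rintro _ ⟨q, rfl⟩; exact h0 q
  rcases image_dichotomy δa w with h | h
  · rw [hw] at h
    have : (0 : ZMod n) ∈ ({0}ᶜ : Set (ZMod n)) := by rw [h]; trivial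
    simp at this
  · rw [hw] at h
    have := Set.eq_of_subset_of_ncard_le hsub h (Set.toFinite _)
    have hx' : x ∈ Set.range δa := by rw [this]; exact hx
    exact hx'

theorem inj_of_surj {n : ℕ} [NeZero n] {δa : ZMod n → ZMod n} {d : ZMod n}
    (h0 : ∀ q, δa q ≠ 0) (hd0 : δa 0 = d) (hdd : δa d = d)
    (hs : ∀ x, x ≠ 0 → ∃ q, δa q = x) (x y : ZMod n) (hx : x ≠ 0) (hy : y ≠ 0)
    (hxy : δa x = δa y) : x = y := by
  have hd : d ≠ 0 := hd0 ▸ h0 0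
  let f : {x : ZMod n // x ≠ 0} → {x : ZMod n // x ≠ 0} := fun x => ⟨δa x, h0 x⟩
  have hf : Function.Surjective f := by
    rintro ⟨z, hz⟩
    obtain ⟨q, hq⟩ := hs z hz
    by_cases h : q = 0
    · subst h
      exact ⟨⟨d, hd⟩, Subtype.ext (by simp only [f]; rw [hdd, ← hd0, hq])⟩
    · exact ⟨⟨q, h⟩, Subtype.ext hq⟩
  have hi : Function.Injective f := Finite.injective_iff_surjective.2 hf
  have := @hi ⟨x, hx⟩ ⟨y, hy⟩ (Subtype.ext hxy)
  exact congrArg Subtype.val this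

/-! ### Expanding a subset -/

theorem CanReach.step {n : ℕ} [NeZero n] {δa : ZMod n → ZMod n}
    (hs : ∀ x, x ≠ 0 → ∃ q, δa q = x) {S : Finset (ZMod n)} {k : ZMod n} (hk : k ∉ S)
    {L : ℕ} (h : CanReach δa (preim δa k S) L) : CanReach δa S (L + (k.val + 1)) := by
  obtain ⟨w, hw, hl⟩ := h
  refine ⟨w ++ Letter.a :: List.replicate k.val Letter.b, ?_, by simp; omega⟩
  have key : ∀ q, act δa (w ++ Letter.a :: List.replicate k.val Letter.b) q
      = δa (act δa w q) + k := by
    intro q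
    simp [act_append, act, act_replicate]
  ext x
  constructor
  · rintro ⟨q, -, rfl⟩
    rw [key]
    have : act δa w q ∈ (preim δa k S : Set (ZMod n)) := by
      rw [← hw]; exact ⟨q, trivial, rfl⟩
    exact mem_preim.1 this
  · intro hx
    have hxk : x - k ≠ 0 := by
      intro h; rw [sub_eq_zero.1 h] at hx; exact hk hx
    obtain ⟨p, hp⟩ := hs _ hxk
    have : p ∈ (preim δa k S : Set (ZMod n)) := by
      refine mem_preim.2 ?_
      rw [hp, sub_add_cancel]; exact hx
    rw [← hw] at this
    obtain ⟨q, -, rfl⟩ := this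
    exact ⟨q, trivial, by rw [key, hp, sub_add_cancel]⟩

theorem card_preim_erase {n : ℕ} [NeZero n] {δa : ZMod n → ZMod n} {d : ZMod n}
    (h0 : ∀ q, δa q ≠ 0) (hd0 : δa 0 = d) (hdd : δa d = d)
    (hs : ∀ x, x ≠ 0 → ∃ q, δa q = x) {S : Finset (ZMod n)} {k : ZMod n} (hk : k ∉ S) :
    ((preim δa k S).erase 0).card = S.card := by
  have hd : d ≠ 0 := hd0 ▸ h0 0
  refine Finset.card_bij (fun q _ => δa q + k) ?_ ?_ ?_
  · intro q hq; exact mem_preim.1 (Finset.mem_of_mem_erase hq)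
  · intro x hx y hy hxy
    exact inj_of_surj h0 hd0 hdd hs x y (Finset.ne_of_mem_erase hx) (Finset.ne_of_mem_erase hy)
      (add_right_cancel hxy)
  · intro x hx
    have hxk : x - k ≠ 0 := by
      intro h; rw [sub_eq_zero.1 h] at hx; exact hk hx
    obtain ⟨p, hp⟩ := hs _ hxk
    have hpk : δa p + k = x := by rw [hp, sub_add_cancel]
    by_cases h : p = 0
    · subst h
      have : δa d + k = x := by rw [hdd, ← hd0]; exact hpk
      exact ⟨d, Finset.mem_erase.2 ⟨hd, mem_preim.2 (this ▸ hx)⟩, this⟩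
    · exact ⟨p, Finset.mem_erase.2 ⟨h, mem_preim.2 (hpk ▸ hx)⟩, hpk⟩

theorem card_preim {n : ℕ} [NeZero n] {δa : ZMod n → ZMod n} {d : ZMod n}
    (h0 : ∀ q, δa q ≠ 0) (hd0 : δa 0 = d) (hdd : δa d = d)
    (hs : ∀ x, x ≠ 0 → ∃ q, δa q = x) {S : Finset (ZMod n)} {k : ZMod n} (hk : k ∉ S)
    (hkd : k + d ∈ S) : (preim δa k S).card = S.card + 1 := by
  rw [← card_preim_erase h0 hd0 hdd hs hk, Finset.card_erase_add_one]
  rw [mem_preim, hd0, add_comm]; exact hkd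

/-! ### Good shifts and the even residues -/

/-- A set meeting a coset of `K` without containing it has a good `k` in that coset. -/
theorem exists_good {n : ℕ} [NeZero n] {d : ZMod n} {K : Finset (ZMod n)}
    (hKd : ∀ x, x ∈ K ↔ ∃ m : ℕ, m • d = x) {S : Finset (ZMod n)} {x y : ZMod n}
    (hx : x ∉ S) (hy : y ∈ S) (hxy : y - x ∈ K) :
    ∃ k, k ∉ S ∧ k + d ∈ S ∧ k - x ∈ K := by
  by_contra! hcon
  have : ∀ m : ℕ, x + m • d ∉ S := by
    intro m
    induction m with
    | zero => simpa using hx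
    | succ m ih =>
      intro h
      refine hcon (x + m • d) ih ?_ ?_
      · rw [add_assoc, ← succ_nsmul]; exact h
      · rw [add_sub_cancel_left]; exact (hKd _).2 ⟨m, rfl⟩
  obtain ⟨m, hm⟩ := (hKd _).1 hxy
  exact this m (by rw [hm]; simpa using hy)

/-- The facts about the even residues `K` used below: `K` is the kernel of a ring homomorphism
`par : ℤ_n → ℤ/2`, has half of the elements, and consists of the multiples of `d`. -/
structure EvenData {n : ℕ} [NeZero n] (d : ZMod n) (par : ZMod n →+* ZMod 2)
    (K : Finset (ZMod n)) : Prop where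
  mem : ∀ x, x ∈ K ↔ par x = 0
  card : 2 * K.card = n
  gen : ∀ x, x ∈ K ↔ ∃ m : ℕ, m • d = x

theorem zmod2_sub {u v : ZMod 2} (hu : u ≠ 0) (hv : v ≠ 0) : u - v = 0 := by
  revert u v; decide

theorem zmod2_one {u : ZMod 2} (hu : u ≠ 0) : u = 1 := by
  revert u; decide

theorem EvenData.card_compl {n : ℕ} [NeZero n] {d : ZMod n} {par : ZMod n →+* ZMod 2}
    {K : Finset (ZMod n)} (E : EvenData d par K) : 2 * (Kᶜ).card = n := by
  have := E.card
  rw [Finset.card_compl, ZMod.card]; omega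

theorem EvenData.exists_good_of_card {n : ℕ} [NeZero n] {d : ZMod n} {par : ZMod n →+* ZMod 2}
    {K : Finset (ZMod n)} (E : EvenData d par K) {S : Finset (ZMod n)}
    (hS : n < 2 * S.card) (hS' : S.card < n) : ∃ k, k ∉ S ∧ k + d ∈ S := by
  obtain ⟨x, hx⟩ : ∃ x, x ∉ S := by
    by_contra! h
    rw [Finset.eq_univ_iff_forall.2 h, Finset.card_univ, ZMod.card] at hS'
    omega
  obtain ⟨y, hy, hyx⟩ : ∃ y ∈ S, y - x ∈ K := by
    by_contra! h
    by_cases hxK : x ∈ K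
    · have : S ⊆ Kᶜ := by
        intro y hy
        rw [Finset.mem_compl]
        intro hyK
        apply h y hy
        rw [E.mem] at *
        rw [map_sub, hxK, hyK, sub_zero]
      have := Finset.card_le_card this
      have := E.card_compl
      omega
    · have : S ⊆ K := by
        intro y hy
        by_contra hyK
        apply h y hy
        rw [E.mem] at *
        rw [map_sub]
        exact zmod2_sub hyK hxK
      have := Finset.card_le_card this
      have := E.card
      omega
  obtain ⟨k, h1, h2, -⟩ := exists_good E.gen hx hy hyx
  exact ⟨k, h1, h2⟩

theorem canReach_of_card {n : ℕ} [NeZero n] {δa : ZMod n → ZMod n} {d : ZMod n}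
    {par : ZMod n →+* ZMod 2} {K : Finset (ZMod n)} (E : EvenData d par K)
    (h0 : ∀ q, δa q ≠ 0) (hd0 : δa 0 = d) (hdd : δa d = d)
    (hs : ∀ x, x ≠ 0 → ∃ q, δa q = x) (j : ℕ) :
    ∀ S : Finset (ZMod n), S.card + j = n → n < 2 * S.card → CanReach δa S (j * n) := by
  induction j with
  | zero =>
    intro S hS _
    have : S = Finset.univ := by
      rw [← Finset.card_eq_iff_eq_univ, ZMod.card]; omega
    refine ⟨[], ?_, by simp⟩
    ext x; simp [act, this]
  | succ j ih =>
    intro S hS hS2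
    obtain ⟨k, hk, hkd⟩ := E.exists_good_of_card hS2 (by omega)
    have hc := card_preim h0 hd0 hdd hs hk hkd
    obtain ⟨w, hw, hl⟩ := CanReach.step hs hk (ih (preim δa k S) (by omega) (by omega))
    refine ⟨w, hw, hl.trans ?_⟩
    have := ZMod.val_lt k
    rw [add_mul]; omega

/-! ### The first expansions of `K` -/

/-- If `δa` preserved parity, no word could identify `0` and `1`. -/
theorem not_parity_preserving {n : ℕ} {δa : ZMod n → ZMod n} (par : ZMod n →+* ZMod 2)
    (hcr : CompletelyReachable δa) (h : ∀ q, par (δa q) = par q) : False := by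
  have key : ∀ (w : List Letter) (x y : ZMod n), par x ≠ par y →
      par (act δa w x) ≠ par (act δa w y) := by
    intro w
    induction w with
    | nil => intro x y h; exact h
    | cons l w ih =>
      intro x y hxy
      cases l with
      | a => exact ih _ _ (by rwa [h, h])
      | b => exact ih _ _ (by rw [map_add, map_add]; simpa using hxy)
  obtain ⟨w, hw⟩ := hcr {0} ⟨0, rfl⟩
  have h1 : ∀ q, act δa w q = 0 := by
    intro q
    have : act δa w q ∈ act δa w '' Set.univ := ⟨q, trivial, rfl⟩
    rw [hw] at this; exact this
  exact key w 0 1 (by simp) (by rw [h1, h1])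

/-- Some even `k` is good for the pullback of `K` along `a b`. -/
theorem exists_first_good {n : ℕ} [NeZero n] {δa : ZMod n → ZMod n} {d : ZMod n}
    {par : ZMod n →+* ZMod 2} {K : Finset (ZMod n)} (E : EvenData d par K)
    (hd0 : δa 0 = d) (hcr : CompletelyReachable δa)
    (hpd : par d = 0) (hc : (preim δa 1 K).card = K.card) :
    ∃ k, k ∉ preim δa 1 K ∧ k + d ∈ preim δa 1 K ∧ k ∈ K := by
  have h0S : (0 : ZMod n) ∉ preim δa 1 K := by
    rw [mem_preim, E.mem, hd0, map_add, hpd]; simp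
  by_cases h : ∃ y ∈ preim δa 1 K, y ∈ K
  · obtain ⟨y, hy, hyK⟩ := h
    obtain ⟨k, h1, h2, h3⟩ := exists_good E.gen h0S hy (by simpa using hyK)
    exact ⟨k, h1, h2, by simpa using h3⟩
  · exfalso
    push Not at h
    have hsub : preim δa 1 K ⊆ Kᶜ := fun y hy => Finset.mem_compl.2 (h y hy)
    have heq := Finset.eq_of_subset_of_card_le hsub (by
      have := E.card_compl; have := E.card; omega)
    apply not_parity_preserving par hcr
    intro q
    have hq : q ∈ preim δa 1 K ↔ q ∈ Kᶜ := by rw [heq]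
    rw [mem_preim, Finset.mem_compl, E.mem, E.mem, map_add, map_one] at hq
    generalize par (δa q) = u at *
    generalize par q = v at *
    revert u v; decide

/-- Two consecutive expansions that saturate the length bound are incompatible with `n ≥ 10`:
`δa` would send the at least three elements of `K ∖ {0, d}` into `2` plus the odd part of
`preim δa 1 K`, which has only two elements. -/
theorem tight_case_false {n : ℕ} [NeZero n] (hn : 10 ≤ n) {δa : ZMod n → ZMod n} {d : ZMod n}
    {par : ZMod n →+* ZMod 2} {K : Finset (ZMod n)} (E : EvenData d par K)
    (hd0 : δa 0 = d) (hdd : δa d = d) (hpd : par d = 0)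
    (hinj : ∀ x y, x ≠ 0 → y ≠ 0 → δa x = δa y → x = y)
    (hd : d ≠ 0)
    (hc : (preim δa 1 K).card = K.card)
    {R₁ R₂ : Finset (ZMod n)} (hR₁ : R₁ = preim δa (-2) (preim δa 1 K))
    (hR₂ : R₂ = preim δa (-1) R₁)
    (hc₁ : R₁.card = K.card + 1) (hK₁ : K ⊆ R₁) (hK₂ : K ⊆ R₂) : False := by
  classical
  have h0K : (0 : ZMod n) ∈ K := (E.mem 0).2 (map_zero par)
  have hdK : d ∈ K := (E.mem d).2 hpd
  have he : d - 1 ∈ R₁ := by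
    have := hK₂ h0K
    rw [hR₂, mem_preim, hd0, ← sub_eq_add_neg] at this; exact this
  have heK : d - 1 ∉ K := by
    rw [E.mem, map_sub, hpd, map_one]; decide
  have hR : insert (d - 1) K = R₁ := by
    apply Finset.eq_of_subset_of_card_le
    · exact Finset.insert_subset he hK₁
    · rw [Finset.card_insert_of_notMem heK, hc₁]
  set A := (K.erase 0).erase d with hA
  have hAc : A.card + 2 = K.card := by
    have h1 : A.card + 1 = (K.erase 0).card :=
      Finset.card_erase_add_one (Finset.mem_erase.2 ⟨hd, hdK⟩)
    have h2 := Finset.card_erase_add_one h0K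
    omega
  have hAm : ∀ q ∈ A, q ≠ 0 ∧ q ≠ d ∧ q ∈ K := by
    intro q hq
    simp only [hA, Finset.mem_erase] at hq
    exact ⟨hq.2.1, hq.1, hq.2.2⟩
  have hodd : ∀ q ∈ A, δa q + -1 ∈ K := by
    intro q hq
    obtain ⟨hq0, hqd, hqK⟩ := hAm q hq
    have := hK₂ hqK
    rw [hR₂, mem_preim, ← hR, Finset.mem_insert] at this
    rcases this with h | h
    · exfalso
      rw [← sub_eq_add_neg] at h
      exact hqd (hinj q d hq0 hd ((sub_left_injective h).trans hdd.symm))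
    · exact h
  have hpar : ∀ q ∈ A, par (δa q) = 1 := by
    intro q hq
    have := (E.mem _).1 (hodd q hq)
    rw [map_add, map_neg, map_one, ← sub_eq_add_neg, sub_eq_zero] at this
    exact this
  set B := A.image (fun q => δa q + -2) with hB
  have hBc : B.card = A.card := by
    apply Finset.card_image_of_injOn
    intro x hx y hy hxy
    exact hinj x y (hAm x hx).1 (hAm y hy).1 (add_right_cancel hxy)
  have hAS : A ⊆ preim δa 1 K := by
    intro q hq
    rw [mem_preim, E.mem, map_add, map_one, hpar q hq]; decide
  have hBS : B ⊆ preim δa 1 K := by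
    intro x hx
    obtain ⟨q, hq, rfl⟩ := Finset.mem_image.1 hx
    have := hK₁ (hAm q hq).2.2
    rw [hR₁, mem_preim] at this; exact this
  have hdis : Disjoint A B := by
    rw [Finset.disjoint_left]
    intro x hxA hxB
    obtain ⟨q, hq, rfl⟩ := Finset.mem_image.1 hxB
    have := (E.mem _).1 (hAm _ hxA).2.2
    rw [map_add, hpar q hq, map_neg, map_ofNat] at this
    revert this; decide
  have := Finset.card_le_card (Finset.union_subset hAS hBS)
  rw [Finset.card_union_of_disjoint hdis] at this
  have := E.card
  omega

theorem eq_neg_of_val {n : ℕ} [NeZero n] {k : ZMod n} {j : ℕ} (h : k.val + j = n) :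
    k = -(j : ZMod n) := by
  have : ((k.val + j : ℕ) : ZMod n) = 0 := by rw [h]; simp
  rw [Nat.cast_add, ZMod.natCast_zmod_val] at this
  exact eq_neg_of_add_eq_zero_left this

theorem EvenData.subset_of_good {n : ℕ} [NeZero n] {d : ZMod n} {par : ZMod n →+* ZMod 2}
    {K : Finset (ZMod n)} (E : EvenData d par K) {R : Finset (ZMod n)} (h0 : (0 : ZMod n) ∈ R)
    (h : ∀ k, k ∉ R → k + d ∈ R → k = -1) : K ⊆ R := by
  intro x hx
  by_contra hxR
  have hx0 : (0 : ZMod n) - x ∈ K := by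
    rw [E.mem] at *; rw [map_sub, hx, map_zero, sub_zero]
  obtain ⟨k, h1, h2, h3⟩ := exists_good E.gen hxR h0 hx0
  rw [h k h1 h2, E.mem, map_sub, (E.mem x).1 hx, map_neg, map_one] at h3
  revert h3; decide

/-! ### The orbit subgroup and the length bound -/

/-- The orbit subgroup is the set of even residues. -/
theorem exists_evenData {n : ℕ} [NeZero n] (hev : Even n) {d : ZMod n}
    (hK : AddSubgroup.closure {d} = AddSubgroup.zmultiples (2 : ZMod n)) :
    ∃ (par : ZMod n →+* ZMod 2) (K : Finset (ZMod n)), EvenData d par K ∧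
      (K : Set (ZMod n)) = (AddSubgroup.closure {d} : AddSubgroup (ZMod n)) := by
  classical
  let par : ZMod n →+* ZMod 2 := ZMod.castHom hev.two_dvd (ZMod 2)
  let K : Finset (ZMod n) := Finset.univ.filter fun x => par x = 0
  have hm : ∀ x, x ∈ K ↔ par x = 0 := by simp [K]
  have hcl : ∀ x, x ∈ K ↔ x ∈ AddSubgroup.closure {d} := by
    intro x
    rw [hm, hK, AddSubgroup.mem_zmultiples_iff]
    constructor
    · intro h
      have h1 : ((x.val : ℕ) : ZMod 2) = 0 := by
        rw [← map_natCast par, ZMod.natCast_zmod_val]; exact h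
      obtain ⟨c, hc⟩ := (ZMod.natCast_eq_zero_iff _ _).1 h1
      refine ⟨c, ?_⟩
      rw [← ZMod.natCast_zmod_val x, hc]
      push_cast
      rw [zsmul_eq_mul, mul_comm]; simp
    · rintro ⟨c, rfl⟩
      rw [map_zsmul, map_ofNat]
      have : (2 : ZMod 2) = 0 := by decide
      change c • (2 : ZMod 2) = 0
      rw [this, smul_zero]
  refine ⟨par, K, ⟨hm, ?_, ?_⟩, ?_⟩
  -- Translation by `1` exchanges `K` and its complement.
  · have : K.card = (Kᶜ).card := by
      refine Finset.card_bij (fun x _ => x + 1) ?_ ?_ ?_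
      · intro x hx
        rw [Finset.mem_compl, hm, map_add, (hm x).1 hx, map_one]; decide
      · intro x _ y _ h; exact add_right_cancel h
      · intro y hy
        rw [Finset.mem_compl, hm] at hy
        refine ⟨y - 1, ?_, sub_add_cancel _ _⟩
        rw [hm, map_sub, map_one, zmod2_one hy, sub_self]
    have h2 := Finset.card_add_card_compl K
    rw [ZMod.card] at h2
    omega
  · intro x
    rw [hcl, ← AddSubgroup.zmultiples_eq_closure, ← mem_multiples_iff_mem_zmultiples]
    exact AddSubmonoid.mem_multiples_iff x d
  · ext x; exact hcl x

/-- In a standardized completely reachable binary circular DFA on `ZMod n`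
(`n` even, `n ≥ 10`) with singleton orbit `{d}` and orbit subgroup `K = 2ℤ_n`, the
subset `K` has a reaching word of length at most `n²/2`. -/
theorem stmt12 {n : ℕ} [NeZero n] (hn : 10 ≤ n) (hev : Even n)
    (δa : ZMod n → ZMod n)
    (hstd : Standardized δa) (hcr : CompletelyReachable δa)
    (d : ZMod n) (hO : orbitSet δa = {d})
    (hK : orbitSubgroup δa = AddSubgroup.zmultiples (2 : ZMod n)) :
    ∃ w : List Letter,
      act δa w '' Set.univ = (orbitSubgroup δa : Set (ZMod n)) ∧
      w.length ≤ n * n / 2 := by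
  have h0 := hstd.1
  have hd0 : δa 0 = d := by
    have : δa^[1] 0 ∈ orbitSet δa := ⟨1, le_rfl, rfl⟩
    rw [hO] at this; exact this
  have hdd : δa d = d := by
    have : δa^[2] 0 ∈ orbitSet δa := ⟨2, by norm_num, rfl⟩
    rw [hO] at this
    have h2 : δa (δa 0) = d := this
    rwa [hd0] at h2
  have hd : d ≠ 0 := hd0 ▸ h0 0
  have hs := surj_of_reach (by omega) h0 hcr
  have hinj := inj_of_surj h0 hd0 hdd hs
  unfold orbitSubgroup at hK ⊢
  rw [hO] at hK ⊢
  obtain ⟨par, K, E, hKeq⟩ := exists_evenData hev hK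
  rw [← hKeq]
  change CanReach δa K (n * n / 2)
  have hpd : par d = 0 := (E.mem d).1 ((E.gen d).2 ⟨1, one_nsmul d⟩)
  have h1K : (1 : ZMod n) ∉ K := by rw [E.mem, map_one]; decide
  have hc : (preim δa 1 K).card = K.card := by
    rw [← card_preim_erase h0 hd0 hdd hs h1K, Finset.erase_eq_of_notMem]
    rw [mem_preim, E.mem, hd0, map_add, hpd, map_one]; decide
  have : Fact (1 < n) := ⟨by omega⟩
  have hv1 : (1 : ZMod n).val = 1 := ZMod.val_one n
  obtain ⟨S, hS⟩ : ∃ S, S = preim δa 1 K := ⟨_, rfl⟩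
  obtain ⟨m, hmdef⟩ : ∃ m, m = K.card := ⟨_, rfl⟩
  have hm : 2 * m = n := hmdef ▸ E.card
  -- The word `a b` carrying `S` onto `K` accounts for the two extra letters.
  suffices h : ∃ L, CanReach δa S L ∧ L + 2 ≤ m * n by
    obtain ⟨L, hL, hL2⟩ := h
    obtain ⟨w, hw, hl⟩ := CanReach.step hs h1K (hS ▸ hL)
    refine ⟨w, hw, hl.trans ?_⟩
    have : n * n / 2 = m * n := by
      rw [show n * n = 2 * (m * n) by rw [← mul_assoc, hm]]; omega
    rw [this, hv1]; exact hL2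
  have hcS : S.card = m := by rw [hS, hc, hmdef]
  obtain ⟨p, rfl⟩ : ∃ p, m = p + 3 := ⟨m - 3, by omega⟩
  have hmul : (p + 3) * n = p * n + n + n + n := by ring
  have hmul2 : (p + 2) * n = p * n + n + n := by ring
  have hmul1 : (p + 1) * n = p * n + n := by ring
  have reach := canReach_of_card E h0 hd0 hdd hs
  obtain ⟨k, hk, hkd, hkK⟩ := exists_first_good E hd0 hcr hpd hc
  rw [← hS] at hk hkd
  have hkv := ZMod.val_lt k
  have hk1 : k.val + 1 ≠ n := by
    intro h
    rw [eq_neg_of_val h, E.mem] at hkK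
    simp at hkK
  have hc₁ := card_preim h0 hd0 hdd hs hk hkd
  by_cases hk2 : k.val + 2 = n
  swap
  · exact ⟨_, CanReach.step hs hk (reach (p + 2) _ (by omega) (by omega)), by omega⟩
  have hk2' : k = -2 := by simpa using eq_neg_of_val hk2
  obtain ⟨R₁, hR₁⟩ : ∃ R, R = preim δa k S := ⟨_, rfl⟩
  rw [← hR₁] at hc₁
  have h0R₁ : (0 : ZMod n) ∈ R₁ := by
    rw [hR₁, mem_preim, hd0, add_comm]; exact hkd
  by_cases hg₁ : ∃ l, l ∉ R₁ ∧ l + d ∈ R₁ ∧ l.val + 1 ≠ n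
  · obtain ⟨l, hl, hld, hln⟩ := hg₁
    have hlv := ZMod.val_lt l
    have hc₂ := card_preim h0 hd0 hdd hs hl hld
    have := CanReach.step hs hl (reach (p + 1) _ (by omega) (by omega))
    rw [hR₁] at this
    exact ⟨_, CanReach.step hs hk this, by omega⟩
  push Not at hg₁
  have hone : ∀ l : ZMod n, l.val + 1 = n → l = -1 := fun l h => by simpa using eq_neg_of_val h
  obtain ⟨l, hl, hld⟩ := E.exists_good_of_card (S := R₁) (by omega) (by omega)
  have hlv := hg₁ l hl hld
  have hl1 : l = -1 := hone l hlv
  have hc₂ := card_preim h0 hd0 hdd hs hl hld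
  obtain ⟨R₂, hR₂⟩ : ∃ R, R = preim δa l R₁ := ⟨_, rfl⟩
  rw [← hR₂] at hc₂
  have h0R₂ : (0 : ZMod n) ∈ R₂ := by
    rw [hR₂, mem_preim, hd0, add_comm]; exact hld
  by_cases hg₂ : ∃ j, j ∉ R₂ ∧ j + d ∈ R₂ ∧ j.val + 1 ≠ n
  · obtain ⟨j, hj, hjd, hjn⟩ := hg₂
    have hjv := ZMod.val_lt j
    have hc₃ := card_preim h0 hd0 hdd hs hj hjd
    have := CanReach.step hs hj (reach p _ (by omega) (by omega))
    rw [hR₂] at this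
    have := CanReach.step hs hl this
    rw [hR₁] at this
    exact ⟨_, CanReach.step hs hk this, by omega⟩
  push Not at hg₂
  exfalso
  subst hk2' hl1 hS
  exact tight_case_false hn E hd0 hdd hpd hinj hd (by omega) hR₁ hR₂ (by omega)
    (E.subset_of_good h0R₁ fun k h1 h2 => hone k (hg₁ k h1 h2))
    (E.subset_of_good h0R₂ fun k h1 h2 => hone k (hg₂ k h1 h2))
end
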